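/- (Non-degenerate coercivity when the initial measure is not concentrated on a straight line.) Let 0 < s < 1 and let the collision kernel b satisfy b(cos θ)·θ^{2+2s} → K as θ → 0+ for some K > 0. Let α ∈ (2s, 2], let F₀ be a Borel probability measure on ℝ³ for which there is NO straight line L = {v₀ + τ w : τ ∈ ℝ} (v₀ ∈ ℝ³, w a unit vector) with F₀(L) = 1, let ψ₀ ∈ 𝒦^α be its characteristic function, and let ψ be a solution of the Fourier-transformed (Bobylev) homogeneous Boltzmann Cauchy problem with initial datum ψ₀. Then there exist T > 0 and C > 0 such that for every t ∈ [0, T] and every measurable h : ℝ³ → ℂ with ∫ (1+|ξ|²)^s |h(ξ)|² dξ < ∞: ∫_{ℝ³} (1+|ξ|²)^s |h(ξ)|² dξ ≤ C ( ∫_{ℝ³} ( ∫_{S²} b(ξ·σ/|ξ|)(1 − |ψ(t,ξ⁻)|) dσ ) |h(ξ)|² dξ + ∫_{ℝ³} |h(ξ)|² dξ ), where ξ⁻ = (ξ − |ξ|σ)/2. -/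

import Mathlib

noncomputable section

open MeasureTheory Real Filter Metric Set
open scoped RealInnerProductSpace Topology

/-- ℝ³ as a Euclidean space. -/
abbrev E3 : Type := EuclideanSpace ℝ (Fin 3)

/-- The surface measure on the unit sphere S² ⊂ ℝ³. -/
def sphμ : Measure (sphere (0 : E3) 1) := (volume : Measure E3).toSphere

/-- The characteristic function (Fourier transform) of a Borel measure on ℝ³,
`ψ(ξ) = ∫ e^{-i v·ξ} dΨ(v)`. -/
def charFn (Ψ : Measure E3) (ξ : E3) : ℂ :=
  ∫ v, Complex.exp (-(Complex.I * (⟪v, ξ⟫ : ℂ))) ∂Ψ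

/-- `ψ` is a characteristic function of some Borel probability measure on ℝ³. -/
def IsCharFn (ψ : E3 → ℂ) : Prop :=
  ∃ Ψ : Measure E3, IsProbabilityMeasure Ψ ∧ ψ = charFn Ψ

/-- Finiteness of `‖φ - 1‖_α`, i.e. the quantitative part of membership in `𝒦^α`. -/
def KBdd (α : ℝ) (φ : E3 → ℂ) : Prop :=
  ∃ C : ℝ, ∀ ξ : E3, ξ ≠ 0 → ‖φ ξ - 1‖ ≤ C * ‖ξ‖ ^ α

/-- Membership in the space `𝒦^α`. -/
def memK (α : ℝ) (φ : E3 → ℂ) : Prop := IsCharFn φ ∧ KBdd α φ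

/-- The distance `‖φ - φ'‖_α = sup_{ξ ≠ 0} |φ(ξ) - φ'(ξ)|/|ξ|^α` on `𝒦^α`. -/
def Kdist (α : ℝ) (φ φ' : E3 → ℂ) : ℝ :=
  ⨆ ξ : {ξ : E3 // ξ ≠ 0}, ‖φ ξ.1 - φ' ξ.1‖ / ‖(ξ.1 : E3)‖ ^ α

/-- `ξ⁺ = ξ/2 + (|ξ|/2)σ`. -/
def xiPlus (ξ : E3) (σ : sphere (0 : E3) 1) : E3 := (1/2 : ℝ) • ξ + (‖ξ‖ / 2) • (σ : E3)

/-- `ξ⁻ = ξ/2 - (|ξ|/2)σ`. -/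
def xiMinus (ξ : E3) (σ : sphere (0 : E3) 1) : E3 := (1/2 : ℝ) • ξ - (‖ξ‖ / 2) • (σ : E3)

/-- The Bobylev collision integrand at time `t`, frequency `ξ`, direction `σ`. -/
def bobylevIntegrand (b : ℝ → ℝ) (ψ : ℝ → E3 → ℂ) (t : ℝ) (ξ : E3)
    (σ : sphere (0 : E3) 1) : ℂ :=
  (b (⟪ξ, (σ : E3)⟫ / ‖ξ‖) : ℂ) *
    (ψ t (xiPlus ξ σ) * ψ t (xiMinus ξ σ) - ψ t ξ)

/-- `ψ : [0,∞) × ℝ³ → ℂ` is a solution of the Fourier-transformed (Bobylev)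
homogeneous Boltzmann Cauchy problem with collision kernel `b` and initial datum `ψ₀`. -/
structure IsBobylevSolution (b : ℝ → ℝ) (ψ : ℝ → E3 → ℂ) (ψ₀ : E3 → ℂ) : Prop where
  cont : ContinuousOn (fun p : ℝ × E3 => ψ p.1 p.2) (Set.Ici 0 ×ˢ Set.univ)
  init : ψ 0 = ψ₀
  isCharFn : ∀ t ≥ 0, IsCharFn (ψ t)
  integrable : ∀ t ≥ 0, ∀ ξ : E3, Integrable (bobylevIntegrand b ψ t ξ) sphμ
  eq : ∀ t ≥ 0, ∀ ξ : E3, HasDerivWithinAt (fun τ => ψ τ ξ)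
      (∫ σ, bobylevIntegrand b ψ t ξ σ ∂sphμ) (Set.Ici 0) t

/-- Continuity of `t ↦ ψ(t,·)` from `[0,∞)` into the metric space `(𝒦^α, ‖·‖_α)`. -/
def KContinuous (α : ℝ) (ψ : ℝ → E3 → ℂ) : Prop :=
  ∀ t₀ ∈ Set.Ici (0:ℝ), Tendsto (fun t => Kdist α (ψ t) (ψ t₀)) (𝓝[Set.Ici (0:ℝ)] t₀) (𝓝 0)

/-- The angular singularity assumption `b(cos θ) θ^{2+2s} → K` as `θ → 0+`. -/
def KernelSingular (b : ℝ → ℝ) (s K : ℝ) : Prop :=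
  Tendsto (fun θ : ℝ => b (Real.cos θ) * θ ^ (2 + 2*s)) (𝓝[>] 0) (𝓝 K)

/-!
Let `X`, `Y` be independent with law `F₀`. If `|ψ₀| = 1` on the plane `ωᗮ`, the projection of
`X - Y` to this plane has characteristic function `1`, so that `F₀` is carried by a line parallel
to `ω`. Hence for each direction `ω` some `η ⟂ ω` has `|ψ₀(η)| < 1`, and by compactness of the
sphere `|ψ(t, ·)| ≤ 1 - δ` on a ball of radius `δ` around such an `η`, with `δ` uniform in `ω`
and in `t ∈ [0, δ]`.

For `|ξ|` large, the directions `σ` for which `ξ⁻` lies in this ball contain a spherical cap of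
radius `δ / |ξ|`, hence of area of order `|ξ|⁻²`. On it the deviation angle is at most of order
`1 / |ξ|`, so the kernel is at least of order `|ξ| ^ (2 + 2s)`, and the angular integral is bounded
below by a multiple of `|ξ| ^ (2s)`. Bounded `ξ` are absorbed by the `L²` term.
-/

section CharFun

variable {E : Type*} [NormedAddCommGroup E] [InnerProductSpace ℝ E] [MeasurableSpace E]
  [BorelSpace E] [SecondCountableTopology E] {μ : Measure E} [IsProbabilityMeasure μ]

lemma charFun_map_orthogonalProjection_sub (V : Submodule ℝ E) [V.HasOrthogonalProjection]
    (t : V) :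
    charFun ((μ.prod μ).map fun z ↦ V.orthogonalProjectionOnto (z.1 - z.2)) t =
      ‖charFun μ (t : E)‖ ^ 2 := by
  rw [← Complex.mul_conj', ← charFun_neg, charFun_apply, integral_map (by fun_prop) (by fun_prop),
    charFun_apply, charFun_apply, ← integral_prod_mul]
  refine integral_congr_ae (.of_forall fun z ↦ ?_)
  simp only [Submodule.inner_orthogonalProjectionOnto_eq_of_mem_right, inner_sub_left,
    inner_neg_right, ← Complex.exp_add]
  push_cast
  ring_nf

lemma ae_prod_sub_mem_orthogonal_of_norm_charFun_eq_one (V : Submodule ℝ E)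
    [CompleteSpace V] (h : ∀ t ∈ V, ‖charFun μ t‖ = 1) :
    ∀ᵐ z ∂μ.prod μ, z.1 - z.2 ∈ Vᗮ := by
  have hmap : (μ.prod μ).map (fun z ↦ V.orthogonalProjectionOnto (z.1 - z.2)) = .dirac 0 := by
    have := Measure.isProbabilityMeasure_map (μ := μ.prod μ)
      (f := fun z ↦ V.orthogonalProjectionOnto (z.1 - z.2)) (by fun_prop)
    refine Measure.ext_of_charFun (funext fun t ↦ ?_)
    rw [charFun_map_orthogonalProjection_sub, h t t.2, charFun_dirac]
    simp
  have hzero : ∀ᵐ v ∂(μ.prod μ).map (fun z ↦ V.orthogonalProjectionOnto (z.1 - z.2)), v = 0 := by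
    rw [hmap]
    simp
  filter_upwards [ae_of_ae_map (by fun_prop) hzero] with z hz
  exact V.orthogonalProjectionOnto_eq_zero_iff.1 hz

lemma exists_mem_norm_charFun_lt_one (V : Submodule ℝ E) [CompleteSpace V]
    (h : ∀ x₀, ¬ ∀ᵐ x ∂μ, x - x₀ ∈ Vᗮ) : ∃ t ∈ V, ‖charFun μ t‖ < 1 := by
  by_contra! hV
  have hswap := Measure.measurePreserving_swap.quasiMeasurePreserving.ae
    (ae_prod_sub_mem_orthogonal_of_norm_charFun_eq_one V fun t ht ↦
      (norm_charFun_le_one t).antisymm (hV t ht))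
  obtain ⟨x₀, hx₀⟩ := (Measure.ae_ae_of_ae_prod hswap).exists
  exact h x₀ hx₀

end CharFun

lemma norm_charFn_eq_norm_charFun (μ : Measure E3) (ξ : E3) : ‖charFn μ ξ‖ = ‖charFun μ ξ‖ := by
  have : charFn μ ξ = charFun μ (-ξ) := by
    simp only [charFn, charFun_apply, inner_neg_right, Complex.ofReal_neg, neg_mul,
      mul_comm Complex.I]
  rw [this, charFun_neg, RCLike.norm_conj]

lemma exists_norm_charFn_lt_one_of_forall_line (μ : Measure E3) [IsProbabilityMeasure μ]
    (hline : ∀ v₀ w : E3, ‖w‖ = 1 → μ {v | ∃ τ : ℝ, v = v₀ + τ • w} ≠ 1) {ω : E3} (hω : ‖ω‖ = 1) :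
    ∃ η, η ≠ 0 ∧ ⟪ω, η⟫ = 0 ∧ ‖charFn μ η‖ < 1 := by
  obtain ⟨η, hη, hlt⟩ : ∃ η ∈ (ℝ ∙ ω)ᗮ, ‖charFun μ η‖ < 1 := by
    refine exists_mem_norm_charFun_lt_one _ fun v₀ hv₀ ↦ hline v₀ ω hω ?_
    rw [Submodule.orthogonal_orthogonal] at hv₀
    have hmem : {v | ∃ τ : ℝ, v = v₀ + τ • ω} ∈ ae μ := by
      filter_upwards [hv₀] with v hv
      obtain ⟨τ, hτ⟩ := Submodule.mem_span_singleton.1 hv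
      exact ⟨τ, by rw [hτ, add_sub_cancel]⟩
    rw [measure_congr (eventuallyEq_univ.2 hmem), measure_univ]
  refine ⟨η, ?_, Submodule.mem_orthogonal_singleton_iff_inner_right.1 hη, ?_⟩
  · rintro rfl
    simp at hlt
  · rwa [norm_charFn_eq_norm_charFun]

section SphericalCap

variable {E : Type*} [NormedAddCommGroup E] [NormedSpace ℝ E]

lemma norm_inv_norm_smul_sub_self {x : E} (hx : x ≠ 0) : ‖‖x‖⁻¹ • x - x‖ = |1 - ‖x‖| := by
  have hsub : ‖x‖⁻¹ • x - x = ((1 - ‖x‖) * ‖x‖⁻¹) • x := by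
    rw [sub_mul, one_mul, mul_inv_cancel₀ (norm_ne_zero_iff.2 hx), sub_smul, one_smul]
  rw [hsub, norm_smul, norm_mul, norm_inv, norm_norm, mul_assoc,
    inv_mul_cancel₀ (norm_ne_zero_iff.2 hx), mul_one, Real.norm_eq_abs]

lemma volumeIoiPow_Ioo_le (n : ℕ) {a b : ℝ} (hb : 0 ≤ b) :
    Measure.volumeIoiPow n (Subtype.val ⁻¹' Ioo a b) ≤ ENNReal.ofReal (b ^ n * (b - a)) := by
  have hmeas : MeasurableSet (Subtype.val ⁻¹' Ioo a b : Set (Ioi (0 : ℝ))) :=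
    measurable_subtype_coe measurableSet_Ioo
  calc Measure.volumeIoiPow n (Subtype.val ⁻¹' Ioo a b)
      = ∫⁻ r in Subtype.val ⁻¹' Ioo a b, ENNReal.ofReal (r.1 ^ n) ∂(volume.comap Subtype.val) :=
        withDensity_apply _ hmeas
    _ ≤ ENNReal.ofReal (b ^ n) * volume.comap Subtype.val (Subtype.val ⁻¹' Ioo a b) := by
        rw [← setLIntegral_const]
        refine setLIntegral_mono' hmeas fun r hr ↦ ENNReal.ofReal_le_ofReal ?_
        exact pow_le_pow_left₀ r.2.le hr.2.le n
    _ ≤ ENNReal.ofReal (b ^ n) * volume (Ioo a b) := by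
        gcongr
        rw [comap_subtype_coe_apply measurableSet_Ioi]
        exact measure_mono (image_preimage_subset _ _)
    _ = ENNReal.ofReal (b ^ n * (b - a)) := by
        rw [Real.volume_Ioo, ENNReal.ofReal_mul (by positivity)]

lemma ball_subset_preimage_homeomorphUnitSphereProd (p : sphere (0 : E) 1) (r : ℝ) :
    ((↑) ⁻¹' ball (p : E) (r / 2) : Set ({0}ᶜ : Set E)) ⊆ homeomorphUnitSphereProd E ⁻¹'
      (ball p r ×ˢ (Subtype.val ⁻¹' Ioo (1 - r / 2) (1 + r / 2))) := by
  intro x hx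
  have hx' : ‖(x : E) - p‖ < r / 2 := by simpa [dist_eq_norm] using hx
  have hradius : |1 - ‖(x : E)‖| < r / 2 := by
    have := abs_norm_sub_norm_le (x : E) p
    rw [norm_eq_of_mem_sphere, abs_sub_comm] at this
    linarith
  have hdir : ‖‖(x : E)‖⁻¹ • (x : E) - p‖ < r := by
    have := norm_sub_le_norm_sub_add_norm_sub (‖(x : E)‖⁻¹ • (x : E)) x p
    rw [norm_inv_norm_smul_sub_self x.2] at this
    linarith
  rw [abs_lt] at hradius
  refine ⟨?_, ?_⟩
  · simpa [Subtype.dist_eq, dist_eq_norm] using hdir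
  · simp only [mem_preimage, homeomorphUnitSphereProd_apply_snd_coe, mem_Ioo]
    constructor <;> linarith

variable [FiniteDimensional ℝ E] [MeasurableSpace E] [BorelSpace E]

lemma addHaar_ball_le_toSphere_ball_mul (μ : Measure E) [μ.IsAddHaarMeasure] (p : sphere (0 : E) 1)
    {r : ℝ} (hr0 : 0 ≤ r) (hr : r ≤ 2) :
    μ (ball (p : E) (r / 2)) ≤
      μ.toSphere (ball p r) * ENNReal.ofReal (2 ^ (Module.finrank ℝ E - 1) * r) := by
  have hzero : (0 : E) ∉ ball (p : E) (r / 2) := fun h ↦ by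
    rw [mem_ball, dist_zero_left, norm_eq_of_mem_sphere] at h
    linarith
  calc μ (ball (p : E) (r / 2))
      = μ.comap (↑) ((↑) ⁻¹' ball (p : E) (r / 2) : Set ({0}ᶜ : Set E)) := by
        rw [comap_subtype_coe_apply (measurableSet_singleton _).compl,
          Subtype.image_preimage_coe, inter_eq_right.2 (subset_compl_singleton_iff.2 hzero)]
    _ ≤ μ.toSphere (ball p r) * Measure.volumeIoiPow (Module.finrank ℝ E - 1)
          (Subtype.val ⁻¹' Ioo (1 - r / 2) (1 + r / 2)) := by
        rw [← Measure.prod_prod,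
          ← μ.measurePreserving_homeomorphUnitSphereProd.measure_preimage_emb
            (homeomorphUnitSphereProd E).measurableEmbedding]
        exact measure_mono (ball_subset_preimage_homeomorphUnitSphereProd p r)
    _ ≤ _ := by
        gcongr
        refine (volumeIoiPow_Ioo_le _ (by linarith)).trans (ENNReal.ofReal_le_ofReal ?_)
        rw [show 1 + r / 2 - (1 - r / 2) = r by ring]
        gcongr
        linarith

lemma exists_mul_pow_le_toSphere_ball (μ : Measure E) [μ.IsAddHaarMeasure] :
    ∃ c > (0 : ℝ), ∀ p : sphere (0 : E) 1, ∀ r ∈ Ioc (0 : ℝ) 2,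
      ENNReal.ofReal (c * r ^ (Module.finrank ℝ E - 1)) ≤ μ.toSphere (ball p r) := by
  set n := Module.finrank ℝ E with hn
  have hv : 0 < μ.real (ball 0 1) := ENNReal.toReal_pos (measure_ball_pos _ _ one_pos).ne'
    measure_ball_lt_top.ne
  refine ⟨μ.real (ball 0 1) / (2 ^ n * 2 ^ (n - 1)), by positivity, fun p r ⟨hr0, hr⟩ ↦ ?_⟩
  have : Nontrivial E := ⟨p, 0, ne_zero_of_mem_unit_sphere p⟩
  have hpow : r ^ n = r ^ (n - 1) * r := (pow_sub_one_mul Module.finrank_pos.ne' r).symm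
  have hlt : ENNReal.ofReal (2 ^ (n - 1) * r) ≠ 0 := by simpa using by positivity
  rw [← ENNReal.mul_le_mul_iff_left hlt ENNReal.ofReal_ne_top, ← ENNReal.ofReal_mul (by positivity)]
  refine le_trans (le_of_eq ?_) (addHaar_ball_le_toSphere_ball_mul μ p hr0.le hr)
  rw [μ.addHaar_ball _ (by positivity), ← ofReal_measureReal measure_ball_lt_top.ne,
    ← ENNReal.ofReal_mul (by positivity), ← hn, div_pow, hpow]
  congr 1
  field_simp

end SphericalCap

section Nondegeneracy

variable {E : Type*} [NormedAddCommGroup E] [InnerProductSpace ℝ E]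

/-- Quantitative nondegeneracy of a characteristic function `φ` in the direction `ω`: around some
frequency orthogonal to `ω`, neither small nor large, the modulus of `φ` stays away from `1`. A
single parameter `δ` controls all scales, so that the condition can be made uniform by letting
`δ → 0`. -/
def IsNondegenerateAlong (δ : ℝ) (φ : E → ℂ) (ω : E) : Prop :=
  ∃ η : E, ⟪ω, η⟫ = 0 ∧ ‖η‖ ∈ Icc δ δ⁻¹ ∧ ∀ x ∈ ball η δ, ‖φ x‖ ≤ 1 - δ

lemma IsNondegenerateAlong.of_smul {δ a : ℝ} {φ : E → ℂ} {ω : E}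
    (h : IsNondegenerateAlong δ φ (a • ω)) (ha : a ≠ 0) : IsNondegenerateAlong δ φ ω := by
  obtain ⟨η, hη, h⟩ := h
  rw [real_inner_smul_left, mul_eq_zero, or_iff_right ha] at hη
  exact ⟨η, hη, h⟩

-- The frequency `η - ⟪ω, η⟫ • ω` is orthogonal to the unit vector `ω` and tends to `η` as `ω → ω₀`.
lemma eventually_isNondegenerateAlong {ψ : ℝ → E → ℂ}
    (hψ : ContinuousOn (fun p : ℝ × E ↦ ψ p.1 p.2) (Ici 0 ×ˢ univ)) {ω₀ η : E} (hη0 : η ≠ 0)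
    (hη : ⟪ω₀, η⟫ = 0) (hψη : ‖ψ 0 η‖ < 1) :
    ∀ᶠ p : ℝ × E in 𝓝 (0, ω₀), 0 < p.1 → ‖p.2‖ = 1 →
      ∀ t ∈ Icc 0 p.1, IsNondegenerateAlong p.1 (ψ t) p.2 := by
  obtain ⟨m, hm, hm1⟩ := exists_between hψη
  have hcont := (hψ (0, η) ⟨self_mem_Ici, mem_univ η⟩).norm
  obtain ⟨ρ, hρ, hball⟩ := Metric.mem_nhdsWithin_iff.1 (hcont.eventually_lt_const hm)
  set proj : ℝ × E → E := fun p ↦ η - ⟪p.2, η⟫ • p.2 with hproj_def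
  have hproj : Continuous proj := by fun_prop
  have hproj0 : proj (0, ω₀) = η := by simp [hproj_def, hη]
  have hlower : ∀ᶠ p in 𝓝 ((0 : ℝ), ω₀), p.1 - ‖proj p‖ < 0 :=
    (continuous_fst.sub hproj.norm).continuousAt.eventually_lt_const (by simpa [hproj0])
  have hupper : ∀ᶠ p in 𝓝 ((0 : ℝ), ω₀), ‖proj p‖ * p.1 < 1 :=
    (hproj.norm.mul continuous_fst).continuousAt.eventually_lt_const (by simp)
  have hclose : ∀ᶠ p in 𝓝 ((0 : ℝ), ω₀), p.1 + dist (proj p) η < ρ :=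
    (continuous_fst.add (hproj.dist continuous_const)).continuousAt.eventually_lt_const
      (by simpa [hproj0])
  have hgap : ∀ᶠ p in 𝓝 ((0 : ℝ), ω₀), p.1 < 1 - m :=
    continuous_fst.continuousAt.eventually_lt_const (by simpa)
  filter_upwards [hlower, hupper, hclose, hgap] with p hlower hupper hclose hgap hδ hω t ht
  refine ⟨proj p, ?_, ⟨by linarith, ?_⟩, fun x hx ↦ ?_⟩
  · simp [hproj_def, inner_sub_right, inner_smul_right, hω]
  · rw [← one_div, le_div_iff₀ hδ]
    exact hupper.le
  · have hmem : (t, x) ∈ ball ((0 : ℝ), η) ρ ∩ Ici 0 ×ˢ univ := by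
      refine ⟨?_, ht.1, mem_univ x⟩
      rw [mem_ball, Prod.dist_eq, max_lt_iff, Real.dist_0_eq_abs, abs_of_nonneg ht.1]
      have hdist : 0 ≤ dist (proj p) η := dist_nonneg
      exact ⟨by linarith [ht.2], by linarith [mem_ball.1 hx, dist_triangle x (proj p) η]⟩
    have hlt : ‖ψ t x‖ < m := hball hmem
    linarith

lemma exists_forall_isNondegenerateAlong [FiniteDimensional ℝ E] {ψ : ℝ → E → ℂ}
    (hψ : ContinuousOn (fun p : ℝ × E ↦ ψ p.1 p.2) (Ici 0 ×ˢ univ))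
    (hnondeg : ∀ ω : E, ‖ω‖ = 1 → ∃ η, η ≠ 0 ∧ ⟪ω, η⟫ = 0 ∧ ‖ψ 0 η‖ < 1) :
    ∃ δ > 0, ∀ t ∈ Icc 0 δ, ∀ ξ : E, ξ ≠ 0 → IsNondegenerateAlong δ (ψ t) ξ := by
  have : ProperSpace E := FiniteDimensional.proper ℝ E
  have huniform := (isCompact_sphere (0 : E) 1).eventually_forall_of_forall_eventually
    (x₀ := (0 : ℝ)) (P := fun δ ω ↦ 0 < δ → ‖ω‖ = 1 →
      ∀ t ∈ Icc 0 δ, IsNondegenerateAlong δ (ψ t) ω) fun ω hω ↦ by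
    obtain ⟨η, hη0, hη, hψη⟩ := hnondeg ω (mem_sphere_zero_iff_norm.1 hω)
    exact eventually_isNondegenerateAlong hψ hη0 hη hψη
  obtain ⟨δ, hδ, hpos⟩ := ((huniform.filter_mono nhdsWithin_le_nhds).and
    (self_mem_nhdsWithin (s := Ioi (0 : ℝ)))).exists
  refine ⟨δ, hpos, fun t ht ξ hξ ↦ ?_⟩
  have hunit : ‖‖ξ‖⁻¹ • ξ‖ = 1 := norm_smul_inv_norm hξ
  exact (hδ _ (mem_sphere_zero_iff_norm.2 hunit) hpos hunit t ht).of_smul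
    (inv_ne_zero (norm_ne_zero_iff.2 hξ))

end Nondegeneracy

section CollisionGeometry

lemma norm_xiMinus_sq (ξ : E3) (σ : sphere (0 : E3) 1) :
    ‖xiMinus ξ σ‖ ^ 2 = ‖ξ‖ ^ 2 * (1 - cos (InnerProductGeometry.angle ξ σ)) / 2 := by
  have hinner := InnerProductGeometry.cos_angle_mul_norm_mul_norm ξ (σ : E3)
  rw [norm_eq_of_mem_sphere, mul_one] at hinner
  rw [xiMinus, norm_sub_sq_real, norm_smul, norm_smul, real_inner_smul_left,
    real_inner_smul_right, ← hinner, norm_eq_of_mem_sphere, norm_of_nonneg (by norm_num),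
    norm_of_nonneg (by positivity)]
  ring

lemma norm_mul_angle_le_pi_mul_norm_xiMinus (ξ : E3) (σ : sphere (0 : E3) 1) :
    ‖ξ‖ * InnerProductGeometry.angle ξ σ ≤ π * ‖xiMinus ξ σ‖ := by
  set θ := InnerProductGeometry.angle ξ (σ : E3)
  have hθ0 : 0 ≤ θ := InnerProductGeometry.angle_nonneg _ _
  have hcos : cos θ ≤ 1 - 2 / π ^ 2 * θ ^ 2 := cos_le_one_sub_mul_cos_sq <| by
    rw [abs_of_nonneg hθ0]
    exact InnerProductGeometry.angle_le_pi _ _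
  refine le_of_sq_le_sq ?_ (by positivity)
  calc (‖ξ‖ * θ) ^ 2 = π ^ 2 * (‖ξ‖ ^ 2 * (2 / π ^ 2 * θ ^ 2) / 2) := by field_simp
    _ ≤ π ^ 2 * (‖ξ‖ ^ 2 * (1 - cos θ) / 2) := by gcongr; linarith
    _ = (π * ‖xiMinus ξ σ‖) ^ 2 := by rw [mul_pow, norm_xiMinus_sq]

lemma angle_pos_of_xiMinus_ne_zero {ξ : E3} {σ : sphere (0 : E3) 1} (h : xiMinus ξ σ ≠ 0) :
    0 < InnerProductGeometry.angle ξ σ := by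
  refine (InnerProductGeometry.angle_nonneg _ _).lt_of_ne' fun hθ ↦ h ?_
  rw [← norm_eq_zero, ← sq_eq_zero_iff, norm_xiMinus_sq, hθ, cos_zero, sub_self, mul_zero,
    zero_div]

lemma dist_xiMinus (ξ : E3) (σ p : sphere (0 : E3) 1) :
    dist (xiMinus ξ σ) (xiMinus ξ p) = ‖ξ‖ / 2 * dist σ p := by
  rw [xiMinus, xiMinus, dist_sub_left, dist_smul₀, norm_of_nonneg (by positivity), Subtype.dist_eq]

-- The vectors `ξ` and `ξ - 2η` have nearly the same norm, and `p` is the direction of the latter.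
lemma exists_dist_xiMinus_le {ξ η : E3} (hξ : ξ ≠ 0) (h : ⟪ξ, η⟫ = 0) :
    ∃ p : sphere (0 : E3) 1, dist (xiMinus ξ p) η ≤ ‖η‖ ^ 2 / ‖ξ‖ := by
  have hξ0 : 0 < ‖ξ‖ := norm_pos_iff.2 hξ
  set u := ξ - (2 : ℝ) • η with hu
  have hnorm : ‖u‖ ^ 2 = ‖ξ‖ ^ 2 + 4 * ‖η‖ ^ 2 := by
    rw [hu, norm_sub_sq_real, real_inner_smul_right, h, norm_smul, Real.norm_two]
    ring
  have hle : ‖ξ‖ ≤ ‖u‖ := le_of_sq_le_sq (by nlinarith [sq_nonneg ‖η‖]) (norm_nonneg u)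
  have hu0 : ‖u‖ ≠ 0 := (hξ0.trans_le hle).ne'
  obtain ⟨p, hp⟩ : ∃ p : sphere (0 : E3) 1, ‖u‖ • (p : E3) = u :=
    ⟨⟨‖u‖⁻¹ • u, mem_sphere_zero_iff_norm.2 (norm_smul_inv_norm (norm_ne_zero_iff.1 hu0))⟩,
      smul_inv_smul₀ hu0 u⟩
  have hdiff : xiMinus ξ p - η = ((‖u‖ - ‖ξ‖) / 2) • (p : E3) := by
    have hη : η = (1 / 2 : ℝ) • (ξ - ‖u‖ • (p : E3)) := by
      rw [hp, hu]
      module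
    rw [xiMinus, hη]
    module
  refine ⟨p, ?_⟩
  rw [dist_eq_norm, hdiff, norm_smul, norm_eq_of_mem_sphere, mul_one,
    norm_of_nonneg (by linarith), le_div_iff₀ hξ0]
  nlinarith

lemma exists_ball_subset_preimage_xiMinus {ξ η : E3} {δ : ℝ} (hξ : ξ ≠ 0) (h : ⟪ξ, η⟫ = 0)
    (hδ : 2 * ‖η‖ ^ 2 ≤ δ * ‖ξ‖) :
    ∃ p : sphere (0 : E3) 1, ball p (δ / ‖ξ‖) ⊆ xiMinus ξ ⁻¹' ball η δ := by
  have hξ0 : 0 < ‖ξ‖ := norm_pos_iff.2 hξ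
  obtain ⟨p, hp⟩ := exists_dist_xiMinus_le hξ h
  refine ⟨p, fun σ hσ ↦ ?_⟩
  have hcap : ‖ξ‖ / 2 * dist σ p < δ / 2 := by
    rw [mem_ball, lt_div_iff₀ hξ0] at hσ
    linarith
  have hcenter : ‖η‖ ^ 2 / ‖ξ‖ ≤ δ / 2 := by
    rw [div_le_iff₀ hξ0]
    linarith
  rw [mem_preimage, mem_ball]
  linarith [dist_triangle (xiMinus ξ σ) (xiMinus ξ p) η, dist_xiMinus ξ σ p]

end CollisionGeometry

section AngularMultiplier

/-- The Fourier multiplier `ξ ↦ ∫ b(ξ·σ/|ξ|) (1 - |φ(ξ⁻)|) dσ` of the coercivity estimate. It takes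
values in `[0, ∞]`, the integrand entering through its positive part. -/
def angularMultiplier (b : ℝ → ℝ) (φ : E3 → ℂ) (ξ : E3) : ENNReal :=
  ∫⁻ σ, ENNReal.ofReal (b (⟪ξ, (σ : E3)⟫ / ‖ξ‖) * (1 - ‖φ (xiMinus ξ σ)‖)) ∂sphμ

lemma exists_mul_sq_le_sphμ_ball : ∃ c > (0 : ℝ), ∀ p, ∀ r ∈ Ioc (0 : ℝ) 2,
    ENNReal.ofReal (c * r ^ 2) ≤ sphμ (ball p r) := by
  simpa [sphμ] using exists_mul_pow_le_toSphere_ball (volume : Measure E3)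

variable {b : ℝ → ℝ} {κ : ℝ}

lemma mul_rpow_le_kernel {θ₀ q M : ℝ} (hκ : 0 ≤ κ) (hq : 0 ≤ q)
    (hb : ∀ θ ∈ Ioo 0 θ₀, κ ≤ b (cos θ) * θ ^ q) {ξ : E3} {σ : sphere (0 : E3) 1}
    (hσ : xiMinus ξ σ ≠ 0) (hM : ‖xiMinus ξ σ‖ ≤ M) (hξ : π * M < θ₀ * ‖ξ‖) :
    κ * (‖ξ‖ / (π * M)) ^ q ≤ b (⟪ξ, (σ : E3)⟫ / ‖ξ‖) := by
  have hM0 : 0 < M := (norm_pos_iff.2 hσ).trans_le hM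
  set θ := InnerProductGeometry.angle ξ (σ : E3) with hθ
  have hcos : cos θ = ⟪ξ, (σ : E3)⟫ / ‖ξ‖ := by
    rw [hθ, InnerProductGeometry.cos_angle, norm_eq_of_mem_sphere, mul_one]
  have hθ0 : 0 < θ := angle_pos_of_xiMinus_ne_zero hσ
  have hθM : ‖ξ‖ * θ ≤ π * M :=
    (norm_mul_angle_le_pi_mul_norm_xiMinus ξ σ).trans (by gcongr)
  have hθ₀ : θ < θ₀ := lt_of_mul_lt_mul_left (by linarith) (norm_nonneg ξ)
  rw [← hcos]
  calc κ * (‖ξ‖ / (π * M)) ^ q ≤ κ * (1 / θ) ^ q := by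
        gcongr ?_ * ?_ ^ q
        rwa [div_le_div_iff₀ (by positivity) hθ0, one_mul]
    _ = κ / θ ^ q := by rw [one_div, inv_rpow hθ0.le, div_eq_mul_inv]
    _ ≤ b (cos θ) := by
        rw [div_le_iff₀ (by positivity)]
        exact hb θ ⟨hθ0, hθ₀⟩

lemma IsNondegenerateAlong.le_angularMultiplier {c θ₀ q δ : ℝ}
    (hc : ∀ p, ∀ r ∈ Ioc (0 : ℝ) 2, ENNReal.ofReal (c * r ^ 2) ≤ sphμ (ball p r))
    (hκ : 0 ≤ κ) (hq : 0 ≤ q) (hb : ∀ θ ∈ Ioo 0 θ₀, κ ≤ b (cos θ) * θ ^ q) (hδ : 0 < δ)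
    {φ : E3 → ℂ} {ξ : E3} (hφ : IsNondegenerateAlong δ φ ξ) (hξ : 0 < ‖ξ‖)
    (hξ_cap : δ ≤ 2 * ‖ξ‖) (hξ_center : 2 * δ⁻¹ ^ 2 ≤ δ * ‖ξ‖)
    (hξ_angle : π * (δ⁻¹ + δ) < θ₀ * ‖ξ‖) :
    ENNReal.ofReal (κ * (‖ξ‖ / (π * (δ⁻¹ + δ))) ^ q * δ * (c * (δ / ‖ξ‖) ^ 2)) ≤
      angularMultiplier b φ ξ := by
  obtain ⟨η, hη, ⟨hη_lower, hη_upper⟩, hφη⟩ := hφ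
  obtain ⟨p, hp⟩ : ∃ p : sphere (0 : E3) 1, ball p (δ / ‖ξ‖) ⊆ xiMinus ξ ⁻¹' ball η δ :=
    exists_ball_subset_preimage_xiMinus (norm_pos_iff.1 hξ) hη <|
      hξ_center.trans' (by gcongr)
  set m := κ * (‖ξ‖ / (π * (δ⁻¹ + δ))) ^ q * δ
  have hm : ∀ σ ∈ ball p (δ / ‖ξ‖),
      m ≤ b (⟪ξ, (σ : E3)⟫ / ‖ξ‖) * (1 - ‖φ (xiMinus ξ σ)‖) := fun σ hσ ↦ by
    have hmem : dist (xiMinus ξ σ) η < δ := hp hσ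
    have hne : xiMinus ξ σ ≠ 0 := fun h ↦ by
      rw [h, dist_zero_left] at hmem
      exact hmem.not_ge hη_lower
    have hle : ‖xiMinus ξ σ‖ ≤ δ⁻¹ + δ := by
      have := norm_le_norm_add_norm_sub' (xiMinus ξ σ) η
      rw [dist_eq_norm] at hmem
      linarith
    have hkernel := mul_rpow_le_kernel hκ hq hb hne hle hξ_angle
    have hκ0 : 0 ≤ κ * (‖ξ‖ / (π * (δ⁻¹ + δ))) ^ q := by positivity
    exact mul_le_mul hkernel (by linarith [hφη _ hmem]) hδ.le (hκ0.trans hkernel)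
  calc ENNReal.ofReal (m * (c * (δ / ‖ξ‖) ^ 2))
      = ENNReal.ofReal m * ENNReal.ofReal (c * (δ / ‖ξ‖) ^ 2) :=
        ENNReal.ofReal_mul (by positivity)
    _ ≤ ENNReal.ofReal m * sphμ (ball p (δ / ‖ξ‖)) := by
        gcongr
        exact hc p _ ⟨by positivity, (div_le_iff₀ hξ).2 hξ_cap⟩
    _ = ∫⁻ _ in ball p (δ / ‖ξ‖), ENNReal.ofReal m ∂sphμ := (setLIntegral_const _ _).symm
    _ ≤ ∫⁻ σ in ball p (δ / ‖ξ‖),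
          ENNReal.ofReal (b (⟪ξ, (σ : E3)⟫ / ‖ξ‖) * (1 - ‖φ (xiMinus ξ σ)‖)) ∂sphμ :=
        setLIntegral_mono' measurableSet_ball fun σ hσ ↦ ENNReal.ofReal_le_ofReal (hm σ hσ)
    _ ≤ angularMultiplier b φ ξ := setLIntegral_le_lintegral _ _

lemma exists_mul_rpow_le_angularMultiplier {s δ : ℝ} (hκ : 0 < κ) (hs : 0 ≤ 2 + 2 * s)
    (hb : ∀ᶠ θ in 𝓝[>] 0, κ ≤ b (cos θ) * θ ^ (2 + 2 * s)) (hδ : 0 < δ) :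
    ∃ c > 0, ∃ R, ∀ (φ : E3 → ℂ) (ξ : E3), R ≤ ‖ξ‖ → IsNondegenerateAlong δ φ ξ →
      ENNReal.ofReal (c * ‖ξ‖ ^ (2 * s)) ≤ angularMultiplier b φ ξ := by
  obtain ⟨θ₀, hθ₀ : 0 < θ₀, hb⟩ := mem_nhdsGT_iff_exists_Ioo_subset.1 hb
  obtain ⟨c, hc0, hc⟩ := exists_mul_sq_le_sphμ_ball
  have hlarge : ∀ᶠ N : ℝ in atTop,
      0 < N ∧ δ ≤ 2 * N ∧ 2 * δ⁻¹ ^ 2 ≤ δ * N ∧ π * (δ⁻¹ + δ) < θ₀ * N := by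
    filter_upwards [eventually_gt_atTop 0, eventually_ge_atTop (δ / 2),
      eventually_ge_atTop (2 * δ⁻¹ ^ 2 / δ), eventually_gt_atTop (π * (δ⁻¹ + δ) / θ₀)]
      with N hpos hcap hcenter hangle
    exact ⟨hpos, (div_le_iff₀' two_pos).1 hcap, (div_le_iff₀' hδ).1 hcenter,
      (div_lt_iff₀' hθ₀).1 hangle⟩
  obtain ⟨R, hR⟩ := hlarge.exists_forall_of_atTop
  refine ⟨κ * (π * (δ⁻¹ + δ))⁻¹ ^ (2 + 2 * s) * δ * (c * δ ^ 2), by positivity, R,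
    fun φ ξ hξ hφ ↦ ?_⟩
  obtain ⟨hpos, hcap, hcenter, hangle⟩ := hR ‖ξ‖ hξ
  have hrpow : (‖ξ‖ / (π * (δ⁻¹ + δ))) ^ (2 + 2 * s) =
      ‖ξ‖ ^ (2 * s) * ‖ξ‖ ^ 2 * (π * (δ⁻¹ + δ))⁻¹ ^ (2 + 2 * s) := by
    rw [div_eq_mul_inv, mul_rpow hpos.le (by positivity), add_comm, rpow_add hpos, rpow_two]
  refine le_of_eq_of_le (congrArg ENNReal.ofReal ?_)
    (hφ.le_angularMultiplier hc hκ.le hs (fun θ hθ ↦ hb hθ) hδ hpos hcap hcenter hangle)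
  rw [hrpow]
  field_simp

end AngularMultiplier

section Weight

lemma one_add_sq_rpow_le {r s : ℝ} (hr : 0 ≤ r) (hs : 0 ≤ s) :
    (1 + r ^ 2) ^ s ≤ 2 ^ s * (1 + r ^ (2 * s)) := by
  have hmax : 1 + r ^ 2 ≤ 2 * max 1 (r ^ 2) := by
    linarith [le_max_left 1 (r ^ 2), le_max_right 1 (r ^ 2)]
  calc (1 + r ^ 2) ^ s ≤ (2 * max 1 (r ^ 2)) ^ s := by gcongr
    _ = 2 ^ s * max 1 (r ^ (2 * s)) := by
        rw [mul_rpow zero_le_two (by positivity), rpow_max zero_le_one (sq_nonneg r) hs, one_rpow,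
          rpow_mul hr, rpow_two]
    _ ≤ 2 ^ s * (1 + r ^ (2 * s)) := by
        gcongr
        exact max_le_add_of_nonneg zero_le_one (by positivity)

lemma exists_ofReal_one_add_sq_rpow_le {s c : ℝ} (hs : 0 ≤ s) (hc : 0 < c) (R : ℝ) :
    ∃ C > (0 : ℝ), ∀ r ≥ 0, ∀ J : ENNReal, (R ≤ r → ENNReal.ofReal (c * r ^ (2 * s)) ≤ J) →
      ENNReal.ofReal ((1 + r ^ 2) ^ s) ≤ ENNReal.ofReal C * (J + 1) := by
  set C := 2 ^ s + 2 ^ s / c + (1 + R ^ 2) ^ s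
  have h₁ : 0 ≤ (2 : ℝ) ^ s := by positivity
  have h₂ : 0 ≤ 2 ^ s / c := by positivity
  have h₃ : 0 ≤ (1 + R ^ 2) ^ s := by positivity
  refine ⟨C, by positivity, fun r hr J hJ ↦ ?_⟩
  rcases le_or_gt R r with hRr | hrR
  · have hlarge : (1 + r ^ 2) ^ s ≤ C * (c * r ^ (2 * s) + 1) := by
      calc (1 + r ^ 2) ^ s ≤ 2 ^ s * (1 + r ^ (2 * s)) := one_add_sq_rpow_le hr hs
        _ = 2 ^ s / c * (c * r ^ (2 * s)) + 2 ^ s * 1 := by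
            field_simp
            ring
        _ ≤ C * (c * r ^ (2 * s)) + C * 1 := by gcongr <;> linarith
        _ = C * (c * r ^ (2 * s) + 1) := by ring
    calc ENNReal.ofReal ((1 + r ^ 2) ^ s)
        ≤ ENNReal.ofReal (C * (c * r ^ (2 * s) + 1)) := ENNReal.ofReal_le_ofReal hlarge
      _ = ENNReal.ofReal C * (ENNReal.ofReal (c * r ^ (2 * s)) + 1) := by
          rw [ENNReal.ofReal_mul (by positivity), ENNReal.ofReal_add (by positivity) zero_le_one,
            ENNReal.ofReal_one]
      _ ≤ ENNReal.ofReal C * (J + 1) := by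
          gcongr
          exact hJ hRr
  · have hsmall : (1 + r ^ 2) ^ s ≤ (1 + R ^ 2) ^ s := by gcongr
    exact (ENNReal.ofReal_le_ofReal (hsmall.trans (by linarith))).trans
      (le_mul_of_one_le_right' le_add_self)

end Weight

theorem nondegenerate_coercivity_not_on_line_general {s κ : ℝ} (hs : 0 < s) (hκ : 0 < κ)
    {b : ℝ → ℝ} (hb : ∀ᶠ θ in 𝓝[>] 0, κ ≤ b (cos θ) * θ ^ (2 + 2 * s))
    {F₀ : Measure E3} [IsProbabilityMeasure F₀]
    (hnoline : ∀ v₀ w : E3, ‖w‖ = 1 → F₀ {v | ∃ τ : ℝ, v = v₀ + τ • w} ≠ 1)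
    {ψ : ℝ → E3 → ℂ} (hψ : ContinuousOn (fun p : ℝ × E3 ↦ ψ p.1 p.2) (Ici 0 ×ˢ univ))
    (hψ₀ : ψ 0 = charFn F₀) :
    ∃ T > (0 : ℝ), ∃ C > (0 : ℝ), ∀ t ∈ Icc 0 T, ∀ h : E3 → ℂ, Measurable h →
      ∫⁻ ξ, ENNReal.ofReal ((1 + ‖ξ‖ ^ 2) ^ s * ‖h ξ‖ ^ 2) ≤
        ENNReal.ofReal C * ((∫⁻ ξ, angularMultiplier b (ψ t) ξ * ENNReal.ofReal (‖h ξ‖ ^ 2)) +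
          ∫⁻ ξ, ENNReal.ofReal (‖h ξ‖ ^ 2)) := by
  obtain ⟨δ, hδ, hnondeg⟩ := exists_forall_isNondegenerateAlong hψ fun ω hω ↦ by
    rw [hψ₀]
    exact exists_norm_charFn_lt_one_of_forall_line F₀ hnoline hω
  obtain ⟨c, hc, R, hlower⟩ := exists_mul_rpow_le_angularMultiplier hκ (by positivity) hb hδ
  obtain ⟨C, hC, hweight⟩ := exists_ofReal_one_add_sq_rpow_le hs.le hc (max R 1)
  refine ⟨δ, hδ, C, hC, fun t ht h hh ↦ ?_⟩
  rw [← lintegral_add_right _ (by fun_prop), ← lintegral_const_mul' _ _ ENNReal.ofReal_ne_top]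
  refine lintegral_mono fun ξ ↦ ?_
  rw [ENNReal.ofReal_mul (by positivity), ← add_one_mul, ← mul_assoc]
  gcongr
  refine hweight ‖ξ‖ (norm_nonneg ξ) _ fun hξ ↦ ?_
  have hξ0 : ξ ≠ 0 := norm_pos_iff.1 (one_pos.trans_le ((le_max_right R 1).trans hξ))
  exact hlower _ ξ ((le_max_left R 1).trans hξ) (hnondeg t ht ξ hξ0)

/-- non-degenerate coercivity when the initial measure is not
concentrated on a straight line. -/
theorem nondegenerate_coercivity_not_on_line
    (s K : ℝ) (hs0 : 0 < s) (hs1 : s < 1) (hK : 0 < K)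
    (b : ℝ → ℝ) (hb_meas : Measurable b) (hb_nonneg : ∀ x, 0 ≤ b x)
    (hb_sing : KernelSingular b s K)
    (α : ℝ) (hα : 2 * s < α) (hα2 : α ≤ 2)
    (F₀ : Measure E3) [IsProbabilityMeasure F₀]
    (hnoline : ∀ (v₀ w : E3), ‖w‖ = 1 → F₀ {v : E3 | ∃ τ : ℝ, v = v₀ + τ • w} ≠ 1)
    (ψ₀ : E3 → ℂ) (hψ₀ : ψ₀ = charFn F₀) (hψ₀K : KBdd α ψ₀)
    (ψ : ℝ → E3 → ℂ) (hψ : IsBobylevSolution b ψ ψ₀) :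
    ∃ T > (0:ℝ), ∃ C > (0:ℝ), ∀ t ∈ Set.Icc (0:ℝ) T, ∀ h : E3 → ℂ, Measurable h →
      (∫⁻ ξ : E3, ENNReal.ofReal ((1 + ‖ξ‖ ^ 2) ^ s * ‖h ξ‖ ^ 2)) < ⊤ →
      (∫⁻ ξ : E3, ENNReal.ofReal ((1 + ‖ξ‖ ^ 2) ^ s * ‖h ξ‖ ^ 2)) ≤
        ENNReal.ofReal C *
          ((∫⁻ ξ : E3,
              (∫⁻ σ, ENNReal.ofReal
                  (b (⟪ξ, (σ : E3)⟫ / ‖ξ‖) * (1 - ‖ψ t (xiMinus ξ σ)‖)) ∂sphμ)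
                * ENNReal.ofReal (‖h ξ‖ ^ 2))
            + ∫⁻ ξ : E3, ENNReal.ofReal (‖h ξ‖ ^ 2)) := by
  obtain ⟨T, hT, C, hC, hcoercive⟩ := nondegenerate_coercivity_not_on_line_general hs0
    (half_pos hK) (hb_sing.eventually_const_le (half_lt_self hK)) hnoline hψ.cont
    (hψ.init.trans hψ₀)
  exact ⟨T, hT, C, hC, fun t ht h hh _ ↦ hcoercive t ht h hh⟩
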